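/- arXiv:2312.09157 — 3 statements merged into one kernel-verified Lean document; each statement's English description precedes it below -/
import Mathlib

section
/- Let d ≥ 1, n = d(d+1)/2, and let τ be a partition of n with τ₁ ≤ n − 2d. Then the dimension vector v_𝛕 associated to the triple 𝛕 = (ξ_d, ξ_d, τ) is a fundamental imaginary root of the star-shaped graph Γ_𝛕, i.e. v_𝛕 ∈ M. -/
/-!
Star-shaped graph with three legs of lengths `r 0`, `r 1`, `r 2`.
The vertex `none` is the central vertex `0`, and `some ⟨i, j⟩` is the
vertex `[i, j+1]` on the `i`-th leg.
-/

/-- Vertex set `I` of the star-shaped graph. -/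
abbrev StarVertex (r : Fin 3 → ℕ) := Option ((i : Fin 3) × Fin (r i))

/-- The entry `(e_u, e_w)` of the Cartan matrix of the star-shaped graph:
`2` on the diagonal, `-1` for adjacent vertices, `0` otherwise. -/
def cartan {r : Fin 3 → ℕ} : StarVertex r → StarVertex r → ℤ
  | none, none => 2
  | none, some p => if p.2.val = 0 then -1 else 0
  | some p, none => if p.2.val = 0 then -1 else 0
  | some p, some q =>
      if p.1 = q.1 then
        (if p.2.val = q.2.val then 2
         else if p.2.val + 1 = q.2.val ∨ q.2.val + 1 = p.2.val then -1 else 0)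
      else 0

/-- The pairing `(e_u, v)` of a basis vector `e_u` with `v ∈ ℤ^I`. -/
def pairing {r : Fin 3 → ℕ} (u : StarVertex r) (v : StarVertex r → ℤ) : ℤ :=
  ∑ w : StarVertex r, cartan u w * v w

/-- The fundamental reflection `s_u(v) = v - (v, e_u) e_u`. -/
def reflAt {r : Fin 3 → ℕ} (u : StarVertex r) (v : StarVertex r → ℤ) :
    StarVertex r → ℤ :=
  fun w => if w = u then v w - pairing u v else v w

/-- One direction of the edge relation of the star-shaped graph. -/
def legRel {r : Fin 3 → ℕ} : StarVertex r → StarVertex r → Prop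
  | none, some p => p.2.val = 0
  | some p, some q => p.1 = q.1 ∧ p.2.val + 1 = q.2.val
  | _, _ => False

/-- The star-shaped graph as a simple graph. -/
def starGraph (r : Fin 3 → ℕ) : SimpleGraph (StarVertex r) :=
  SimpleGraph.fromRel legRel

/-- `v ∈ M`: `v` is a fundamental imaginary root, i.e. `v ≠ 0`, the support of `v`
induces a connected subgraph, and `(e_u, v) ≤ 0` for every vertex `u`. -/
def IsFundImaginary {r : Fin 3 → ℕ} (v : StarVertex r → ℤ) : Prop :=
  v ≠ 0 ∧ (SimpleGraph.induce {u | v u ≠ 0} (starGraph r)).Connected ∧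
    ∀ u : StarVertex r, pairing u v ≤ 0

/-- `y` lies in the Weyl-group orbit of `x` (every element of `W` is a word in the
fundamental reflections, which are involutions). -/
def InWOrbit {r : Fin 3 → ℕ} (x y : StarVertex r → ℤ) : Prop :=
  ∃ l : List (StarVertex r), y = l.foldr reflAt x

/-- `y` lies in the orbit of `x` under the subgroup `H ≤ W` generated by the
reflections at the non-central vertices. -/
def InHOrbit {r : Fin 3 → ℕ} (x y : StarVertex r → ℤ) : Prop :=
  ∃ l : List ((i : Fin 3) × Fin (r i)), y = l.foldr (fun p => reflAt (some p)) x

/-- The coordinates of `v` read along the `i`-th leg: `coord v i 0 = v₀` is the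
central coordinate, `coord v i j = v_{[i,j]}` for `1 ≤ j ≤ r i`, and `0` beyond. -/
def coord {r : Fin 3 → ℕ} (v : StarVertex r → ℤ) (i : Fin 3) : ℕ → ℤ
  | 0 => v none
  | j + 1 => if h : j < r i then v (some ⟨i, ⟨j, h⟩⟩) else 0

/-- `δ(v) = v₀ - ∑_{i=1}^{3} (v₀ - v_{[i,1]})`. -/
def deltaInv {r : Fin 3 → ℕ} (v : StarVertex r → ℤ) : ℤ :=
  v none - ∑ i : Fin 3, (v none - coord v i 1)

/-- `v ∈ (ℕ^I)*`: the coordinates of `v` are nonnegative and non-increasing along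
each leg: `v₀ ≥ v_{[i,1]} ≥ ⋯ ≥ v_{[i,r_i]} ≥ 0`. -/
def InNStar {r : Fin 3 → ℕ} (v : StarVertex r → ℤ) : Prop :=
  ∀ (i : Fin 3) (j : ℕ), coord v i (j + 1) ≤ coord v i j

/-- The sequence `σ^i(v) = (v₀ - v_{[i,1]}, …, v_{[i,r_i-1]} - v_{[i,r_i]}, v_{[i,r_i]})`
of successive differences along the `i`-th leg (its entries are
`sigmaSeq v i 0, …, sigmaSeq v i (r i)`; it vanishes beyond). -/
def sigmaSeq {r : Fin 3 → ℕ} (v : StarVertex r → ℤ) (i : Fin 3) (j : ℕ) : ℤ :=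
  coord v i j - coord v i (j + 1)

/-- `v ∈ (ℕ^I)**`: `v ∈ (ℕ^I)*` and each `σ^i(v)` is non-increasing, i.e. `v = v_𝛍`
for a triple of partitions `𝛍`. -/
def InNStarStar {r : Fin 3 → ℕ} (v : StarVertex r → ℤ) : Prop :=
  InNStar v ∧ ∀ (i : Fin 3) (j : ℕ), sigmaSeq v i (j + 1) ≤ sigmaSeq v i j

/-- A partition of `n`: a non-increasing sequence `parts 0 ≥ parts 1 ≥ ⋯`
(`parts j` is the `(j+1)`-th part) with exactly `len` nonzero parts summing to `n`. -/
structure PartitionOf (n : ℕ) where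
  parts : ℕ → ℕ
  antitone : ∀ j : ℕ, parts (j + 1) ≤ parts j
  len : ℕ
  pos_of_lt : ∀ j < len, 0 < parts j
  zero_of_le : ∀ j : ℕ, len ≤ j → parts j = 0
  sum_parts : ∑ j ∈ Finset.range len, parts j = n

/-- The dimension vector `v_𝛍` of a triple of partitions of `n` whose parts are given
by `p 0, p 1, p 2`: coordinate `n` at the central vertex, and
`n - (μ^i_1 + ⋯ + μ^i_j)` at the vertex `[i, j]`. -/
def dimVec (r : Fin 3 → ℕ) (n : ℕ) (p : Fin 3 → ℕ → ℕ) : StarVertex r → ℤ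
  | none => (n : ℤ)
  | some q => (n : ℤ) - ∑ s ∈ Finset.range (q.2.val + 1), (p q.1 s : ℤ)

lemma sum_leg_ite {r : Fin 3 → ℕ} (v : StarVertex r → ℤ) (i : Fin 3) (a : ℕ) :
    ∑ k : Fin (r i), (if k.val = a then v (some ⟨i, k⟩) else 0) = coord v i (a + 1) := by
  by_cases h : a < r i
  · rw [Finset.sum_eq_single (⟨a, h⟩ : Fin (r i))]
    · simp [coord, h]
    · intro b _ hb
      exact if_neg fun hba => hb (Fin.ext hba)
    · simp
  · simp only [coord, h, dite_false]
    exact Finset.sum_eq_zero fun k _ => if_neg (by omega)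

lemma pairing_none {r : Fin 3 → ℕ} (v : StarVertex r → ℤ) :
    pairing none v = 2 * v none - ∑ i : Fin 3, coord v i 1 := by
  simp only [pairing, Fintype.sum_option, Fintype.sum_sigma, cartan, ← sum_leg_ite v _ 0,
    sub_eq_add_neg, ← Finset.sum_neg_distrib]
  congr 1
  refine Finset.sum_congr rfl fun i _ => Finset.sum_congr rfl fun k _ => ?_
  split_ifs <;> simp

lemma sum_leg_cartan_self {r : Fin 3 → ℕ} (v : StarVertex r → ℤ) (i : Fin 3) (j : Fin (r i)) :
    cartan (some ⟨i, j⟩) none * v none +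
        ∑ k : Fin (r i), cartan (some ⟨i, j⟩) (some ⟨i, k⟩) * v (some ⟨i, k⟩) =
      2 * coord v i (j + 1) - coord v i j - coord v i (j + 2) := by
  obtain ⟨j, hj⟩ := j
  have expand (k : Fin (r i)) :
      cartan (some ⟨i, ⟨j, hj⟩⟩) (some ⟨i, k⟩) * v (some ⟨i, k⟩) =
        2 * (if k.val = j then v (some ⟨i, k⟩) else 0) -
          (if k.val = j + 1 then v (some ⟨i, k⟩) else 0) -
          (if k.val + 1 = j then v (some ⟨i, k⟩) else 0) := by
    simp only [cartan, if_true]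
    split_ifs <;> omega
  simp only [expand, Finset.sum_sub_distrib, ← Finset.mul_sum, sum_leg_ite]
  cases j with
  | zero => simp [cartan, coord]; ring
  | succ j => simp [cartan, sum_leg_ite]; ring

lemma pairing_some {r : Fin 3 → ℕ} (v : StarVertex r → ℤ) (i : Fin 3) (j : Fin (r i)) :
    pairing (some ⟨i, j⟩) v = 2 * coord v i (j + 1) - coord v i j - coord v i (j + 2) := by
  rw [← sum_leg_cartan_self, pairing, Fintype.sum_option, Fintype.sum_sigma]
  congr 1
  refine Finset.sum_eq_single i (fun i' _ hi' => Finset.sum_eq_zero fun k _ => ?_) (by simp)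
  simp [cartan, hi'.symm]

lemma starGraph_reachable_none {r : Fin 3 → ℕ} (i : Fin 3) (j : ℕ) (hj : j < r i) :
    (starGraph r).Reachable none (some ⟨i, ⟨j, hj⟩⟩) := by
  induction j with
  | zero =>
    refine SimpleGraph.Adj.reachable ?_
    simp [starGraph, SimpleGraph.fromRel_adj, legRel]
  | succ j ih =>
    refine (ih (by omega)).trans (SimpleGraph.Adj.reachable ?_)
    simp [starGraph, SimpleGraph.fromRel_adj, legRel]

lemma starGraph_connected (r : Fin 3 → ℕ) : (starGraph r).Connected := by
  rw [SimpleGraph.connected_iff_exists_forall_reachable]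
  refine ⟨none, ?_⟩
  rintro (_ | ⟨i, j, hj⟩)
  · rfl
  · exact starGraph_reachable_none i j hj

namespace PartitionOf

lemma sum_range_of_len_le {n : ℕ} (P : PartitionOf n) {j : ℕ} (hj : P.len ≤ j) :
    ∑ s ∈ Finset.range j, P.parts s = n := by
  refine (Finset.sum_subset (Finset.range_mono hj) fun s _ hs =>
    P.zero_of_le s ?_).symm.trans P.sum_parts
  simpa using hs

lemma sum_range_lt {n : ℕ} (P : PartitionOf n) {j : ℕ} (hj : j < P.len) :
    ∑ s ∈ Finset.range j, P.parts s < n := by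
  calc ∑ s ∈ Finset.range j, P.parts s < ∑ s ∈ Finset.range (j + 1), P.parts s := by
        rw [Finset.sum_range_succ]
        have := P.pos_of_lt j hj
        omega
    _ ≤ ∑ s ∈ Finset.range P.len, P.parts s :=
        Finset.sum_le_sum_of_subset (Finset.range_mono hj)
    _ = n := P.sum_parts

/-- The staircase partition `(d, d - 1, …, 1)`. -/
def staircase (d : ℕ) : PartitionOf (d * (d + 1) / 2) where
  parts s := d - s
  antitone j := by omega
  len := d
  pos_of_lt j hj := by omega
  zero_of_le j hj := by omega
  sum_parts := by
    induction d with
    | zero => simp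
    | succ d ih =>
      rw [Finset.sum_range_succ']
      simp only [Nat.add_sub_add_right, ih, Nat.sub_zero]
      grind

end PartitionOf

lemma coord_dimVec {n : ℕ} (P : Fin 3 → PartitionOf n) (i : Fin 3) (j : ℕ) :
    coord (dimVec (fun i => (P i).len - 1) n fun i => (P i).parts) i j =
      n - ∑ s ∈ Finset.range j, ((P i).parts s : ℤ) := by
  cases j with
  | zero => simp [coord, dimVec]
  | succ j =>
    by_cases h : j < (P i).len - 1
    · simp [coord, dimVec, h]
    · have := (P i).sum_range_of_len_le (j := j + 1) (by omega)
      simp only [coord, h, dite_false]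
      zify at this
      rw [this, sub_self]

lemma dimVec_pos {n : ℕ} (hn : 0 < n) (P : Fin 3 → PartitionOf n)
    (u : StarVertex fun i => (P i).len - 1) :
    0 < dimVec (fun i => (P i).len - 1) n (fun i => (P i).parts) u := by
  rcases u with _ | ⟨i, j, hj⟩
  · simpa [dimVec] using hn
  · have := (P i).sum_range_lt (Nat.add_lt_of_lt_sub hj)
    zify at this
    simpa [dimVec] using this

/-- The dimension vector of a triple of partitions of `n > 0` is a fundamental imaginary root
as soon as the largest parts sum to at most `n`. -/
theorem isFundImaginary_dimVec {n : ℕ} (hn : 0 < n) (P : Fin 3 → PartitionOf n)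
    (hP : ∑ i, (P i).parts 0 ≤ n) :
    IsFundImaginary (dimVec (fun i => (P i).len - 1) n fun i => (P i).parts) := by
  refine ⟨fun h => (dimVec_pos hn P none).ne' (congrFun h none), ?_, ?_⟩
  · have hsupp : {u | dimVec (fun i => (P i).len - 1) n (fun i => (P i).parts) u ≠ 0} =
        Set.univ := Set.eq_univ_of_forall fun u => (dimVec_pos hn P u).ne'
    rw [hsupp, (SimpleGraph.induceUnivIso _).connected_iff]
    exact starGraph_connected _
  · rintro (_ | ⟨i, j⟩)
    · zify at hP
      simp only [pairing_none, coord_dimVec, Finset.sum_range_one, Finset.sum_sub_distrib]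
      simp [dimVec]
      linarith
    · have := (P i).antitone j
      simp only [pairing_some, coord_dimVec, Finset.sum_range_succ]
      omega

/-- If `τ₁ ≤ n - 2d` then the dimension vector of `(ξ_d, ξ_d, τ)` is a fundamental
imaginary root of the star-shaped graph `Γ_𝛕` with legs of lengths
`d - 1, d - 1, ℓ(τ) - 1`. -/
theorem staircase_dimVec_fundamental_imaginary (d : ℕ) (hd : 1 ≤ d) (n : ℕ)
    (hn : n = d * (d + 1) / 2) (τ : PartitionOf n)
    (hτ : (τ.parts 0 : ℤ) ≤ (n : ℤ) - 2 * d) :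
    IsFundImaginary
      (dimVec ![d - 1, d - 1, τ.len - 1] n
        ![fun s => d - s, fun s => d - s, τ.parts]) := by
  subst hn
  have hpos : 0 < d * (d + 1) / 2 := Nat.div_pos (by nlinarith) two_pos
  let P : Fin 3 → PartitionOf (d * (d + 1) / 2) :=
    ![PartitionOf.staircase d, PartitionOf.staircase d, τ]
  have hr : ![d - 1, d - 1, τ.len - 1] = fun i => (P i).len - 1 := by
    funext i
    fin_cases i <;> rfl
  have hp : ![fun s => d - s, fun s => d - s, τ.parts] = fun i => (P i).parts := by
    funext i
    fin_cases i <;> rfl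
  rw [hr, hp]
  refine isFundImaginary_dimVec hpos P ?_
  simp only [Fin.sum_univ_three, P, PartitionOf.staircase, Matrix.cons_val]
  omega
end

section
/- Let m ≥ 1 and let μ be a partition of 2m with μ ⊴ (m, m) (equivalently μ₁ ≤ m). Then there exists a partition λ of 2m − 2 with λ ⊴ (m−1, m−1) such that μ is obtained from λ by adding two boxes, no two in the same row; that is, λ_i ≤ μ_i ≤ λ_i + 1 for all i. -/
/-- A non-increasing sequence vanishing from `N` on and with sum `n` is the sequence of parts of
a partition of `n`. -/
theorem PartitionOf.exists_parts_eq {n : ℕ} (f : ℕ → ℕ) (N : ℕ) (hf : ∀ j, f (j + 1) ≤ f j)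
    (hN : ∀ j, N ≤ j → f j = 0) (hsum : ∑ j ∈ Finset.range N, f j = n) :
    ∃ p : PartitionOf n, p.parts = f := by
  have hex : ∃ k, f k = 0 := ⟨N, hN N le_rfl⟩
  have hzero : ∀ j, Nat.find hex ≤ j → f j = 0 := fun j hj =>
    Nat.le_zero.mp ((antitone_nat_of_succ_le hf hj).trans (Nat.find_spec hex).le)
  refine ⟨⟨f, hf, Nat.find hex, fun j hj => Nat.pos_of_ne_zero (Nat.find_min hex hj), hzero, ?_⟩,
    rfl⟩
  rw [← hsum]
  refine Finset.sum_subset (Finset.range_mono (Nat.find_min' hex (hN N le_rfl))) ?_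
  intro j _ hj
  exact hzero j (by simpa using hj)

/-- Removing a box from row `a` and one from the last row `b` of a partition leaves a partition
as soon as row `a` is strictly longer than the next row or is the penultimate row. -/
theorem PartitionOf.exists_remove_two {n : ℕ} (μ : PartitionOf n) {a b : ℕ} (hab : a < b)
    (hb : μ.len = b + 1) (ha : μ.parts (a + 1) < μ.parts a ∨ a + 1 = b) :
    ∃ p : PartitionOf (n - 2),
      ∀ i, p.parts i = μ.parts i - if i = a ∨ i = b then 1 else 0 := by
  have hsum : ∑ j ∈ Finset.range μ.len, (μ.parts j - if j = a ∨ j = b then 1 else 0) = n - 2 := by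
    have hsplit : ∀ j ∈ Finset.range μ.len, μ.parts j =
        (μ.parts j - if j = a ∨ j = b then 1 else 0) +
          ((if j = a then 1 else 0) + if j = b then 1 else 0) := by
      intro j hj
      have := μ.pos_of_lt j (Finset.mem_range.mp hj)
      split_ifs <;> omega
    have h := μ.sum_parts
    rw [Finset.sum_congr rfl hsplit, Finset.sum_add_distrib, Finset.sum_add_distrib,
      Finset.sum_ite_eq', Finset.sum_ite_eq', if_pos (Finset.mem_range.mpr (by omega)),
      if_pos (Finset.mem_range.mpr (by omega))] at h
    omega
  have hanti : ∀ j, (μ.parts (j + 1) - if j + 1 = a ∨ j + 1 = b then 1 else 0) ≤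
      μ.parts j - if j = a ∨ j = b then 1 else 0 := by
    intro j
    have hj := μ.antitone j
    rcases eq_or_ne j b with rfl | hjb
    · simp [μ.zero_of_le (j + 1) hb.le]
    rcases eq_or_ne j a with rfl | hja <;> split_ifs <;> omega
  obtain ⟨p, hp⟩ := PartitionOf.exists_parts_eq
    (fun j => μ.parts j - if j = a ∨ j = b then 1 else 0) μ.len hanti
    (fun j hj => by simp [μ.zero_of_le j hj]) hsum
  exact ⟨p, congrFun hp⟩

/-- Every partition `μ` of `2m` dominated by `(m, m)` (i.e. with `μ₁ ≤ m`) is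
obtained from a partition `λ` of `2m - 2` dominated by `(m-1, m-1)` by adding two
boxes, no two in the same row: `λ_i ≤ μ_i ≤ λ_i + 1` for all `i`. -/
theorem exists_vertical_strip_pred (m : ℕ) (hm : 1 ≤ m) (μ : PartitionOf (2 * m))
    (hμ : μ.parts 0 ≤ m) :
    ∃ lam : PartitionOf (2 * m - 2), lam.parts 0 ≤ m - 1 ∧
      ∀ i : ℕ, lam.parts i ≤ μ.parts i ∧ μ.parts i ≤ lam.parts i + 1 := by
  have hsum := μ.sum_parts
  have hlen : 2 ≤ μ.len := by
    by_contra! hlt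
    have hle := Finset.sum_le_sum_of_subset (f := μ.parts)
      (Finset.range_mono (show μ.len ≤ 1 by omega))
    rw [Finset.sum_range_one] at hle
    omega
  obtain ⟨c, hc⟩ := Nat.exists_eq_add_of_le' hlen
  rcases hμ.lt_or_eq with hlt | heq
  · obtain ⟨p, hp⟩ := μ.exists_remove_two (Nat.lt_succ_self c) hc (Or.inr rfl)
    refine ⟨p, by rw [hp]; omega, fun i => ?_⟩
    rw [hp]
    split_ifs <;> omega
  · have hrow : μ.parts (0 + 1) < μ.parts 0 ∨ 0 + 1 = c + 1 := by
      rcases Nat.eq_zero_or_pos c with rfl | hpos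
      · exact Or.inr rfl
      · left
        have hle := Finset.sum_le_sum_of_subset (f := μ.parts)
          (Finset.range_mono (show 3 ≤ μ.len by omega))
        have htwo := μ.pos_of_lt 2 (by omega)
        simp only [Finset.sum_range_succ, Finset.sum_range_zero] at hle
        rw [zero_add]
        omega
    obtain ⟨p, hp⟩ := μ.exists_remove_two (Nat.succ_pos c) hc hrow
    refine ⟨p, by simp [hp, heq], fun i => ?_⟩
    rw [hp]
    split_ifs <;> omega
end

section
/- Let m ≥ 0 and let μ be a partition of 2m + 1 with μ ⊴ (m+1, m) (equivalently μ₁ ≤ m + 1). Then there exists a partition λ of 2m with λ ⊴ (m, m) such that μ is obtained from λ by adding a single box; that is, there is an index i₀ with μ_{i₀} = λ_{i₀} + 1 and μ_i = λ_i for all i ≠ i₀. -/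
namespace PartitionOf

lemma sum_range_of_len_le_s11 {n : ℕ} (μ : PartitionOf n) {k : ℕ} (hk : μ.len ≤ k) :
    ∑ j ∈ Finset.range k, μ.parts j = n := by
  refine Eq.trans ?_ μ.sum_parts
  refine (Finset.sum_subset (Finset.range_mono hk) fun j _ hj => ?_).symm
  exact μ.zero_of_le j (by simpa using hj)

lemma parts_zero_add_parts_one_le {n : ℕ} (μ : PartitionOf n) :
    μ.parts 0 + μ.parts 1 ≤ n := by
  have h := μ.sum_range_of_len_le_s11 (Nat.le_add_right μ.len 2)
  rw [Finset.sum_range_succ', Finset.sum_range_succ'] at h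
  simp only [zero_add] at h
  omega

/-- A box can be removed from any row strictly longer than the next one. -/
lemma exists_remove_box {n : ℕ} (μ : PartitionOf (n + 1)) {i : ℕ}
    (hi : μ.parts (i + 1) < μ.parts i) :
    ∃ lam : PartitionOf n, μ.parts i = lam.parts i + 1 ∧
      ∀ j : ℕ, j ≠ i → μ.parts j = lam.parts j := by
  have hlen : i < μ.len := by
    by_contra h
    have := μ.zero_of_le i (by omega)
    omega
  have hone : μ.parts i = 1 → μ.len = i + 1 := by
    intro h
    by_contra hne
    have := μ.pos_of_lt (i + 1) (by omega)
    omega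
  have hsum : ∑ j ∈ Finset.range μ.len, Function.update μ.parts i (μ.parts i - 1) j = n := by
    have hmem : i ∈ Finset.range μ.len := Finset.mem_range.mpr hlen
    have h := μ.sum_parts
    rw [← Finset.add_sum_erase _ _ hmem] at h
    rw [Finset.sum_update_of_mem hmem, ← Finset.erase_eq]
    omega
  refine ⟨⟨Function.update μ.parts i (μ.parts i - 1), fun j => ?_,
    if μ.parts i = 1 then i else μ.len, fun j hj => ?_, fun j hj => ?_, ?_⟩, ?_, fun j hj => ?_⟩
  · have := μ.antitone j
    grind [Function.update_apply]
  · have := μ.pos_of_lt j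
    grind [Function.update_apply]
  · have := μ.zero_of_le j
    grind [Function.update_apply]
  · split_ifs with h
    · rw [hone h, Finset.sum_range_succ] at hsum
      simpa [h] using hsum
    · exact hsum
  · simp only [Function.update_self]
    omega
  · simp [hj]

end PartitionOf

/-- Every partition `μ` of `2m + 1` dominated by `(m+1, m)` (i.e. with
`μ₁ ≤ m + 1`) is obtained from a partition `λ` of `2m` dominated by `(m, m)` by
adding a single box. -/
theorem exists_single_box_pred (m : ℕ) (μ : PartitionOf (2 * m + 1))
    (hμ : μ.parts 0 ≤ m + 1) :
    ∃ lam : PartitionOf (2 * m), lam.parts 0 ≤ m ∧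
      ∃ i₀ : ℕ, μ.parts i₀ = lam.parts i₀ + 1 ∧
        ∀ i : ℕ, i ≠ i₀ → μ.parts i = lam.parts i := by
  rcases hμ.eq_or_lt with h | h
  · have := μ.parts_zero_add_parts_one_le
    obtain ⟨lam, h₀, hne⟩ := μ.exists_remove_box (i := 0) (by rw [zero_add]; omega)
    exact ⟨lam, by omega, 0, h₀, hne⟩
  · have hlen : μ.len ≠ 0 := fun h₀ => by simpa [h₀] using μ.sum_parts
    have hlast := μ.pos_of_lt (μ.len - 1) (by omega)
    have hnext := μ.zero_of_le (μ.len - 1 + 1) (by omega)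
    obtain ⟨lam, h₀, hne⟩ := μ.exists_remove_box (i := μ.len - 1) (by omega)
    refine ⟨lam, ?_, _, h₀, hne⟩
    by_cases hz : 0 = μ.len - 1
    · rw [← hz] at h₀
      omega
    · have := hne 0 hz
      omega
end
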